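/- There is a constant c such that for every directed acyclic graph G as above and every m ≥ N, the clause set Stone(G,m) has a regWRTL refutation of size at most c·N·m³. -/

import Mathlib

open scoped Classical

/-! ### Clauses and literals -/

abbrev Lit (V : Type) := V × Bool
abbrev Clause (V : Type) := Finset (V × Bool)

/-- Propositional variables for the Stone principle: `p i j` and `r j`. -/
inductive SV where
  | p (i j : ℕ) : SV
  | r (j : ℕ) : SV
deriving DecidableEq

/-- A dag on vertices `1,…,N` with unique sink `1`, in which every non-source vertex
(the vertices `1,…,n`) has exactly the two predecessors `p1 i` and `p2 i`,
every edge `(i′,i)` satisfies `i′ > i`, and the sources are exactly `n+1,…,N`. -/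
structure StoneDag where
  N : ℕ
  n : ℕ
  p1 : ℕ → ℕ
  p2 : ℕ → ℕ
  n_lt_N : n < N
  p1_gt : ∀ i, 1 ≤ i → i ≤ n → i < p1 i
  p2_gt : ∀ i, 1 ≤ i → i ≤ n → i < p2 i
  p1_le : ∀ i, 1 ≤ i → i ≤ n → p1 i ≤ N
  p2_le : ∀ i, 1 ≤ i → i ≤ n → p2 i ≤ N
  p_ne : ∀ i, 1 ≤ i → i ≤ n → p1 i ≠ p2 i
  unique_sink : ∀ i, 2 ≤ i → i ≤ N → ∃ v, 1 ≤ v ∧ v ≤ n ∧ (p1 v = i ∨ p2 v = i)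

/-- The clause set `Stone(G,m)`. -/
def stoneClauses (G : StoneDag) (m : ℕ) : Set (Clause SV) :=
  { C | ∃ i, 1 ≤ i ∧ i ≤ G.N ∧
      C = (Finset.Icc 1 m).image (fun j => ((SV.p i j, true) : Lit SV)) } ∪
  { C | ∃ i j, G.n < i ∧ i ≤ G.N ∧ 1 ≤ j ∧ j ≤ m ∧
      C = {(SV.p i j, false), (SV.r j, true)} } ∪
  { C | ∃ j, 1 ≤ j ∧ j ≤ m ∧ C = {(SV.p 1 j, false), (SV.r j, false)} } ∪
  { C | ∃ i j j' j'', 1 ≤ i ∧ i ≤ G.n ∧ 1 ≤ j ∧ j ≤ m ∧ 1 ≤ j' ∧ j' ≤ m ∧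
      1 ≤ j'' ∧ j'' ≤ m ∧ j ≠ j' ∧ j ≠ j'' ∧
      C = {(SV.p (G.p1 i) j', false), (SV.r j', false),
           (SV.p (G.p2 i) j'', false), (SV.r j'', false),
           (SV.p i j, false), (SV.r j, true)} }

/-! ### Resolution inference rules -/

/-- `(A ∖ {x}) ∪ (B ∖ {¬x})`. -/
def wres {V : Type} [DecidableEq V] (x : V) (A B : Clause V) : Clause V :=
  A.erase (x, true) ∪ B.erase (x, false)

/-- w-resolution inference. -/
def wstep {V : Type} [DecidableEq V] (x : V) (A B C : Clause V) : Prop :=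
  C = wres x A B

/-- ordinary resolution inference. -/
def rstep {V : Type} [DecidableEq V] (x : V) (A B C : Clause V) : Prop :=
  (x, true) ∈ A ∧ (x, false) ∈ B ∧ C = wres x A B

/-- degenerate resolution inference. -/
def dstep {V : Type} [DecidableEq V] (x : V) (A B C : Clause V) : Prop :=
  ((x, true) ∈ A ∧ (x, false) ∈ B ∧ C = wres x A B) ∨
  ((x, true) ∈ A ∧ (x, false) ∉ B ∧ C = B) ∨
  ((x, true) ∉ A ∧ (x, false) ∈ B ∧ C = A) ∨
  ((x, true) ∉ A ∧ (x, false) ∉ B ∧ (C = A ∨ C = B))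

/-! ### Tree-like proofs -/

/-- Binary proof trees: each node is labeled with a clause, internal nodes also
with a resolution variable. -/
inductive PTree (V : Type) [DecidableEq V] where
  | leaf : Clause V → PTree V
  | node : Clause V → V → PTree V → PTree V → PTree V

namespace PTree

variable {V : Type} [DecidableEq V]

/-- The clause labeling the root. -/
def clause : PTree V → Clause V
  | leaf c => c
  | node c _ _ _ => c

/-- Number of nodes. -/
def size : PTree V → ℕ
  | leaf _ => 1
  | node _ _ t1 t2 => t1.size + t2.size + 1

/-- The set of variables used as resolution variables. -/
def resVars : PTree V → Finset V
  | leaf _ => ∅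
  | node _ x t1 t2 => insert x (t1.resVars ∪ t2.resVars)

/-- No variable is used as a resolution variable more than once on any
root-to-leaf path. -/
def regular : PTree V → Prop
  | leaf _ => True
  | node _ x t1 t2 => x ∉ t1.resVars ∧ x ∉ t2.resVars ∧ t1.regular ∧ t2.regular

/-- Every internal node is obtained from its children by the inference `step`. -/
def wf (step : V → Clause V → Clause V → Clause V → Prop) : PTree V → Prop
  | leaf _ => True
  | node c x t1 t2 => step x t1.clause t2.clause c ∧ t1.wf step ∧ t2.wf step

/-- All clauses occurring in the tree. -/
def clauses : PTree V → Set (Clause V)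
  | leaf c => {c}
  | node c _ t1 t2 => t1.clauses ∪ t2.clauses ∪ {c}

/-- Every leaf is labeled by a clause of `Γ` or by a clause occurring strictly
earlier in postorder; `S` is the set of clauses occurring before this subtree. -/
def lemmasOK (Γ : Set (Clause V)) : PTree V → Set (Clause V) → Prop
  | leaf c, S => c ∈ Γ ∨ c ∈ S
  | node _ _ t1 t2, S => t1.lemmasOK Γ S ∧ t2.lemmasOK Γ (S ∪ t1.clauses)

/-- Every leaf is labeled by a clause of `Γ`. -/
def leavesIn (Γ : Set (Clause V)) : PTree V → Prop
  | leaf c => c ∈ Γ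
  | node _ _ t1 t2 => t1.leavesIn Γ ∧ t2.leavesIn Γ

/-- Postorder scan computing, from the set `L` of clauses learned so far
(initially `Γ`), the pair of (i) the set of clauses learned after traversing the
subtree — a clause becomes learned when it is the final clause of an input
subderivation, i.e. a subderivation each of whose inferences has at least one
hypothesis that is already learned — and (ii) whether this subtree is an input
subderivation. -/
def scan : PTree V → Set (Clause V) → Set (Clause V) × Prop
  | leaf _, L => (L, True)
  | node c _ t1 t2, L =>
      let r1 := t1.scan L
      let r2 := t2.scan r1.1
      let inp : Prop := r1.2 ∧ r2.2 ∧ (t1.clause ∈ r1.1 ∨ t2.clause ∈ r2.1)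
      ({ d | d ∈ r2.1 ∨ (inp ∧ d = c) }, inp)

/-- Every leaf is labeled by a learned clause (a clause of the initial set `L`,
or one derived by an input subderivation strictly earlier in postorder). -/
def lemOK : PTree V → Set (Clause V) → Prop
  | leaf c, L => c ∈ L
  | node _ _ t1 t2, L => t1.lemOK L ∧ t2.lemOK (t1.scan L).1

end PTree

/-- regWRTL refutation of `Γ`. -/
def RegWRTLRefutation {V : Type} [DecidableEq V] (Γ : Set (Clause V)) (T : PTree V) : Prop :=
  T.clause = ∅ ∧ T.wf wstep ∧ T.regular ∧ T.lemmasOK Γ ∅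

/-- pool resolution refutation of `Γ`. -/
def PoolRefutation {V : Type} [DecidableEq V] (Γ : Set (Clause V)) (T : PTree V) : Prop :=
  T.clause = ∅ ∧ T.wf dstep ∧ T.regular ∧ T.lemmasOK Γ ∅

/-- regRTL refutation of `Γ`. -/
def RegRTLRefutation {V : Type} [DecidableEq V] (Γ : Set (Clause V)) (T : PTree V) : Prop :=
  T.clause = ∅ ∧ T.wf rstep ∧ T.regular ∧ T.lemmasOK Γ ∅

/-- regRTI refutation of `Γ`: all lemmas are input lemmas. -/
def RegRTIRefutation {V : Type} [DecidableEq V] (Γ : Set (Clause V)) (T : PTree V) : Prop :=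
  T.clause = ∅ ∧ T.wf rstep ∧ T.regular ∧ T.lemOK Γ

/-- regRTI derivation of the clause `D` from `Γ`. -/
def RegRTIDeriv {V : Type} [DecidableEq V] (Γ : Set (Clause V)) (D : Clause V)
    (T : PTree V) : Prop :=
  T.clause = D ∧ T.wf rstep ∧ T.regular ∧ T.lemOK Γ ∧
  ∀ x ∈ T.resVars, (x, true) ∉ D ∧ (x, false) ∉ D

/-- regular tree-like resolution derivation of the clause `D` from `Γ`. -/
def RegTreeDeriv {V : Type} [DecidableEq V] (Γ : Set (Clause V)) (D : Clause V)
    (T : PTree V) : Prop :=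
  T.clause = D ∧ T.wf rstep ∧ T.regular ∧ T.leavesIn Γ ∧
  ∀ x ∈ T.resVars, (x, true) ∉ D ∧ (x, false) ∉ D

/-! ### Dag-like derivations -/

/-- A dag-like resolution derivation: a sequence of `len` clauses, each an
axiom (`just i = none`) or obtained by resolution from two earlier clauses. -/
structure DagDeriv (V : Type) [DecidableEq V] where
  len : ℕ
  cl : ℕ → Clause V
  just : ℕ → Option (ℕ × ℕ × V)

namespace DagDeriv

variable {V : Type} [DecidableEq V]

/-- Validity relative to the initial clause set `Γ`. -/
def ok (D : DagDeriv V) (Γ : Set (Clause V)) : Prop :=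
  ∀ i, i < D.len →
    match D.just i with
    | none => D.cl i ∈ Γ
    | some (a, b, x) => a < i ∧ b < i ∧ rstep x (D.cl a) (D.cl b) (D.cl i)

/-- `j` is a premise of `i`. -/
def prem (D : DagDeriv V) (i j : ℕ) : Prop :=
  ∃ a b x, D.just i = some (a, b, x) ∧ (j = a ∨ j = b)

/-- `j` lies in the subderivation of `i` (is reachable from `i` in the dag). -/
def reach (D : DagDeriv V) : ℕ → ℕ → Prop := Relation.ReflTransGen D.prem

/-- `x` is the resolution variable of the inference at `i`. -/
def resAt (D : DagDeriv V) (i : ℕ) (x : V) : Prop := ∃ a b, D.just i = some (a, b, x)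

/-- No variable is used as resolution variable twice along a path of the dag. -/
def regular (D : DagDeriv V) : Prop :=
  ∀ i a b x, D.just i = some (a, b, x) →
    ∀ j, (D.reach a j ∨ D.reach b j) → ¬ D.resAt j x

/-- The subderivation of `i` uses `x` as a resolution variable. -/
def usesVar (D : DagDeriv V) (i : ℕ) (x : V) : Prop := ∃ j, D.reach i j ∧ D.resAt j x

end DagDeriv

/-! ### Supports, bypassing, and the sets `B`, `B⁺`, `S_ℓ^B(C)` for a clause
`C = ¬p_{i_1,j_1} ∨ … ∨ ¬p_{i_k,j_k}` given by `k` and the functions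
`I J : ℕ → ℕ` (with `I ℓ = i_ℓ`, `J ℓ = j_ℓ` for `1 ≤ ℓ ≤ k`). -/

/-- Index `ℓ` is bypassed. -/
def bypassed (k : ℕ) (J : ℕ → ℕ) (ℓ : ℕ) : Prop :=
  ∃ ℓ', ℓ < ℓ' ∧ ℓ' ≤ k ∧ J ℓ' = J ℓ

/-- `ℓ'` is the max-bypasser of `ℓ`. -/
def maxByp (k : ℕ) (J : ℕ → ℕ) (ℓ ℓ' : ℕ) : Prop :=
  ℓ < ℓ' ∧ ℓ' ≤ k ∧ J ℓ' = J ℓ ∧ ∀ a, ℓ < a → a ≤ k → J a = J ℓ → a ≤ ℓ'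

/-- `i_{ℓ'}` directly supports `i_ℓ`. -/
def dsup (G : StoneDag) (k : ℕ) (I J : ℕ → ℕ) (ℓ' ℓ : ℕ) : Prop :=
  1 ≤ ℓ ∧ ℓ < ℓ' ∧ ℓ' ≤ k ∧
  (maxByp k J ℓ ℓ' ∨
    (¬ bypassed k J ℓ ∧ (I ℓ' = G.p1 (I ℓ) ∨ I ℓ' = G.p2 (I ℓ))))

/-- `i_a` supports `i_b`: reflexive transitive closure of direct support. -/
def supp (G : StoneDag) (k : ℕ) (I J : ℕ → ℕ) : ℕ → ℕ → Prop :=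
  Relation.ReflTransGen (dsup G k I J)

/-- `dom(C)` as a set of vertices. -/
def domv (k : ℕ) (I : ℕ → ℕ) : Set ℕ := { v | ∃ a, 1 ≤ a ∧ a ≤ k ∧ I a = v }

/-- `S_ℓ(C)`: the set of vertices of `dom(C)` supporting `i_ℓ`. -/
def suppSet (G : StoneDag) (k : ℕ) (I J : ℕ → ℕ) (ℓ : ℕ) : Set ℕ :=
  { v | ∃ a, 1 ≤ a ∧ a ≤ k ∧ I a = v ∧ supp G k I J a ℓ }

/-- `i_ℓ ∈ B`: not bypassed and some predecessor outside `dom(C)`. -/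
def Bidx (G : StoneDag) (k : ℕ) (I J : ℕ → ℕ) (ℓ : ℕ) : Prop :=
  1 ≤ ℓ ∧ ℓ ≤ k ∧ ¬ bypassed k J ℓ ∧
  (G.p1 (I ℓ) ∉ domv k I ∨ G.p2 (I ℓ) ∉ domv k I)

/-- `i_ℓ ∈ B₁`: exactly one predecessor outside `dom(C)`. -/
def B1idx (G : StoneDag) (k : ℕ) (I J : ℕ → ℕ) (ℓ : ℕ) : Prop :=
  Bidx G k I J ℓ ∧ (G.p1 (I ℓ) ∈ domv k I ∨ G.p2 (I ℓ) ∈ domv k I)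

/-- `i_ℓ ∈ B₂`: both predecessors outside `dom(C)`. -/
def B2idx (G : StoneDag) (k : ℕ) (I J : ℕ → ℕ) (ℓ : ℕ) : Prop :=
  1 ≤ ℓ ∧ ℓ ≤ k ∧ ¬ bypassed k J ℓ ∧
  G.p1 (I ℓ) ∉ domv k I ∧ G.p2 (I ℓ) ∉ domv k I

/-- `i_ℓ ∈ B⁺`: in `B`, or bypassed with max-bypasser in `B`. -/
def Bplus (G : StoneDag) (k : ℕ) (I J : ℕ → ℕ) (ℓ : ℕ) : Prop :=
  Bidx G k I J ℓ ∨ (1 ≤ ℓ ∧ ℓ ≤ k ∧ ∃ ℓ', maxByp k J ℓ ℓ' ∧ Bidx G k I J ℓ')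

/-- Membership in `S_ℓ^B(C)` (on indices). -/
inductive SBmem (G : StoneDag) (k : ℕ) (I J : ℕ → ℕ) (ℓ : ℕ) : ℕ → Prop where
  | base : SBmem G k I J ℓ ℓ
  | byp (a b : ℕ) : SBmem G k I J ℓ a → (a = ℓ ∨ ¬ Bidx G k I J a) →
      maxByp k J a b → ¬ Bidx G k I J b → SBmem G k I J ℓ b
  | pred (a b : ℕ) : SBmem G k I J ℓ a → (a = ℓ ∨ ¬ Bidx G k I J a) →
      ¬ bypassed k J a → 1 ≤ b → b ≤ k →
      (I b = G.p1 (I a) ∨ I b = G.p2 (I a)) → SBmem G k I J ℓ b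

/-- The clause `C_ℓ`. -/
noncomputable def Clc (G : StoneDag) (k : ℕ) (I J : ℕ → ℕ) (ℓ : ℕ) : Clause SV :=
  ((Finset.Icc 1 k).filter fun a =>
      SBmem G k I J ℓ a ∧ ¬(a = ℓ ∧ bypassed k J ℓ)).image
    fun a => ((SV.p (I a) (J a), false) : Lit SV)

/-- The clause `E_ℓ`. -/
noncomputable def Elc (G : StoneDag) (k : ℕ) (I J : ℕ → ℕ) (ℓ : ℕ) : Clause SV :=
  ((Finset.Icc 1 k).filter fun a =>
      SBmem G k I J ℓ a ∧ Bplus G k I J a ∧ (Bidx G k I J ℓ → a ≠ ℓ)).image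
    fun a => ((SV.r (J a), false) : Lit SV)

/-- `t_1,…,t_r` enumerates the indices of `B ∪ {1}` in decreasing order. -/
def EnumB (G : StoneDag) (k : ℕ) (I J : ℕ → ℕ) (r : ℕ) (t : ℕ → ℕ) : Prop :=
  (∀ q, 1 ≤ q → q ≤ r → (Bidx G k I J (t q) ∨ t q = 1)) ∧
  (∀ q q', 1 ≤ q → q < q' → q' ≤ r → t q' < t q) ∧
  (∀ ℓ, Bidx G k I J ℓ ∨ ℓ = 1 → ∃ q, 1 ≤ q ∧ q ≤ r ∧ t q = ℓ)

/-- The clause `F_q`. -/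
noncomputable def Fcl (G : StoneDag) (k : ℕ) (I J : ℕ → ℕ) (r : ℕ) (t : ℕ → ℕ)
    (q : ℕ) : Clause SV :=
  if q = r ∧ ¬ Bidx G k I J 1 then Elc G k I J 1
  else (Finset.Icc 1 (q - 1)).image fun q' => ((SV.r (J (t q')), false) : Lit SV)

/-- The standing hypotheses on the clause `C`: `k ≥ 1`, `1 = i_1 < … < i_k ≤ n`,
`j_ℓ ∈ {1,…,m}`, and every vertex of `dom(C)` supports vertex `1`. -/
def GoodC (G : StoneDag) (m k : ℕ) (I J : ℕ → ℕ) : Prop :=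
  1 ≤ k ∧ I 1 = 1 ∧ I k ≤ G.n ∧
  (∀ a b, 1 ≤ a → a < b → b ≤ k → I a < I b) ∧
  (∀ a, 1 ≤ a → a ≤ k → 1 ≤ J a ∧ J a ≤ m) ∧
  (∀ a, 1 ≤ a → a ≤ k → supp G k I J a 1)

/-! ### Bounded regular derivations under a partial assignment -/

namespace PTree

variable {V : Type} [DecidableEq V]

theorem clause_mem_clauses (t : PTree V) : t.clause ∈ t.clauses := by
  cases t <;> simp [clause, clauses]

end PTree

section Derivable

variable {V : Type} [DecidableEq V]

/-- For every set `S` of earlier clauses that, together with `Γ`, subsumes all of `L`, there is a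
regular w-resolution tree of size at most `s` with lemmas from `S`, resolving only on variables of
`A`, whose final clause is contained in `F`, and after which all of `L'` is subsumed. -/
def Derivable (Γ : Set (Clause V)) (L L' : Set (Set (Lit V))) (A : Set V) (F : Set (Lit V))
    (s : ℕ) : Prop :=
  ∀ S : Set (Clause V), (∀ q ∈ L, ∃ K : Clause V, (K ∈ Γ ∨ K ∈ S) ∧ ∀ l ∈ K, l ∈ q) →
    ∃ t : PTree V, t.wf wstep ∧ t.regular ∧ t.lemmasOK Γ S ∧ (∀ l ∈ t.clause, l ∈ F) ∧
      (∀ x ∈ t.resVars, x ∈ A) ∧ t.size ≤ s ∧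
      ∀ q ∈ L', ∃ K : Clause V, (K ∈ Γ ∨ K ∈ S ∨ K ∈ t.clauses) ∧ ∀ l ∈ K, l ∈ q

variable {Γ : Set (Clause V)} {L L' L₁ L₂ : Set (Set (Lit V))} {A A' : Set V}
  {F F' : Set (Lit V)} {s s' s₁ s₂ : ℕ}

theorem Derivable.mono (h : Derivable Γ L L' A F s) (hA : A ⊆ A') (hF : F ⊆ F') (hs : s ≤ s') :
    Derivable Γ L L' A' F' s' := by
  intro S hS
  obtain ⟨t, h1, h2, h3, h4, h5, h6, h7⟩ := h S hS
  exact ⟨t, h1, h2, h3, fun l hl => hF (h4 l hl), fun x hx => hA (h5 x hx), h6.trans hs, h7⟩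

theorem Derivable.mono_learned (h : Derivable Γ L L' A F s) (hL : L ⊆ L₁) (hL' : L₂ ⊆ L') :
    Derivable Γ L₁ L₂ A F s := by
  intro S hS
  obtain ⟨t, h1, h2, h3, h4, h5, h6, h7⟩ := h S fun q hq => hS q (hL hq)
  exact ⟨t, h1, h2, h3, h4, h5, h6, fun q hq => h7 q (hL' hq)⟩

theorem Derivable.learn (h : Derivable Γ L L' A F s) : Derivable Γ L (insert F L') A F s := by
  intro S hS
  obtain ⟨t, h1, h2, h3, h4, h5, h6, h7⟩ := h S hS
  refine ⟨t, h1, h2, h3, h4, h5, h6, ?_⟩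
  rintro q (rfl | hq)
  · exact ⟨t.clause, Or.inr (Or.inr t.clause_mem_clauses), h4⟩
  · exact h7 q hq

theorem Derivable.initial {c : Clause V} (hc : c ∈ Γ) (hF : ∀ l ∈ c, l ∈ F) :
    Derivable Γ L L A F 1 := by
  intro S hS
  refine ⟨.leaf c, trivial, trivial, Or.inl hc, hF, by simp [PTree.resVars], le_rfl, ?_⟩
  intro q hq
  obtain ⟨K, hK, h⟩ := hS q hq
  exact ⟨K, hK.imp_right Or.inl, h⟩

theorem Derivable.lemma_mem {q : Set (Lit V)} (hq : q ∈ L) (hF : q ⊆ F) :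
    Derivable Γ L L A F 1 := by
  intro S hS
  obtain ⟨c, hc, hcq⟩ := hS q hq
  refine ⟨.leaf c, trivial, trivial, hc, fun l hl => hF (hcq l hl), by simp [PTree.resVars],
    le_rfl, ?_⟩
  intro q hq
  obtain ⟨K, hK, h⟩ := hS q hq
  exact ⟨K, hK.imp_right Or.inl, h⟩

theorem Derivable.resolve {x : V} (hx : x ∈ A)
    (h₁ : Derivable Γ L L₁ (A \ {x}) (insert (x, true) F) s₁)
    (h₂ : Derivable Γ L₁ L₂ (A \ {x}) (insert (x, false) F) s₂) :
    Derivable Γ L L₂ A F (s₁ + s₂ + 1) := by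
  intro S hS
  obtain ⟨t, a1, a2, a3, a4, a5, a6, a7⟩ := h₁ S hS
  obtain ⟨t', b1, b2, b3, b4, b5, b6, b7⟩ := h₂ (S ∪ t.clauses) a7
  refine ⟨.node (wres x t.clause t'.clause) x t t', ⟨rfl, a1, b1⟩,
    ⟨fun h => (a5 x h).2 rfl, fun h => (b5 x h).2 rfl, a2, b2⟩, ⟨a3, b3⟩, ?_, ?_, ?_, ?_⟩
  · intro l hl
    simp only [PTree.clause, wres, Finset.mem_union, Finset.mem_erase] at hl
    rcases hl with ⟨h, hl⟩ | ⟨h, hl⟩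
    · exact (a4 l hl).resolve_left h
    · exact (b4 l hl).resolve_left h
  · intro y hy
    simp only [PTree.resVars, Finset.mem_insert, Finset.mem_union] at hy
    rcases hy with rfl | hy | hy
    · exact hx
    · exact (a5 y hy).1
    · exact (b5 y hy).1
  · simp only [PTree.size]
    omega
  · intro q hq
    obtain ⟨K, hK, h⟩ := b7 q hq
    refine ⟨K, ?_, h⟩
    simp only [PTree.clauses, Set.mem_union] at hK ⊢
    tauto

end Derivable

/-! ### Stone derivations -/

/-- The clause `¬p_{u,j} ∨ r_j`. -/
def stoneRed (u j : ℕ) : Set (Lit SV) := {(SV.p u j, false), (SV.r j, true)}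

/-- Case distinction on the stone placed on vertex `v`. -/
theorem derivable_stone_cases {G : StoneDag} {m v : ℕ} (hv : 1 ≤ v) (hvN : v ≤ G.N)
    {Lf : ℕ → Set (Set (Lit SV))} {A A' : Set SV} {F : Set (Lit SV)} {s : ℕ → ℕ}
    (hA' : ∀ x ∈ A', x ∈ A ∧ ∀ j, 1 ≤ j → x ≠ SV.p v j)
    (hA : ∀ j, 1 ≤ j → j ≤ m → SV.p v j ∈ A)
    (h : ∀ k, k < m → Derivable (stoneClauses G m) (Lf k) (Lf (k + 1)) A'
      (insert (SV.p v (k + 1), false) F) (s k)) :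
    Derivable (stoneClauses G m) (Lf 0) (Lf m) A F (∑ k ∈ Finset.range m, (s k + 1) + 1) := by
  have key : ∀ k, k ≤ m → Derivable (stoneClauses G m) (Lf 0) (Lf k)
      (A' ∪ {x | ∃ j, 1 ≤ j ∧ j ≤ k ∧ x = SV.p v j})
      (F ∪ {l | ∃ j, k < j ∧ j ≤ m ∧ l = (SV.p v j, true)})
      (∑ k ∈ Finset.range k, (s k + 1) + 1) := by
    intro k
    induction k with
    | zero =>
      intro _
      refine (Derivable.initial (c := (Finset.Icc 1 m).image
        (fun j => ((SV.p v j, true) : Lit SV))) ?_ ?_).mono subset_rfl subset_rfl (by simp)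
      · exact Or.inl (Or.inl (Or.inl ⟨v, hv, hvN, rfl⟩))
      · intro l hl
        obtain ⟨j, hj, rfl⟩ := Finset.mem_image.1 hl
        rw [Finset.mem_Icc] at hj
        exact Or.inr ⟨j, by omega, hj.2, rfl⟩
    | succ k ih =>
      intro hk
      have hx : SV.p v (k + 1) ∈ A' ∪ {x | ∃ j, 1 ≤ j ∧ j ≤ k + 1 ∧ x = SV.p v j} :=
        Or.inr ⟨k + 1, by omega, le_rfl, rfl⟩
      refine (Derivable.resolve hx ((ih (by omega)).mono ?_ ?_ le_rfl)
        ((h k (by omega)).mono ?_ ?_ le_rfl)).mono subset_rfl subset_rfl ?_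
      · rintro x (hx | ⟨j, h1, h2, rfl⟩)
        · exact ⟨Or.inl hx, (hA' x hx).2 _ (by omega)⟩
        · refine ⟨Or.inr ⟨j, h1, by omega, rfl⟩, ?_⟩
          simp only [Set.mem_singleton_iff, SV.p.injEq]
          omega
      · rintro l (hl | ⟨j, h1, h2, rfl⟩)
        · exact Or.inr (Or.inl hl)
        · rcases eq_or_ne j (k + 1) with rfl | hj
          · exact Or.inl rfl
          · exact Or.inr (Or.inr ⟨j, by omega, h2, rfl⟩)
      · exact fun x hx => ⟨Or.inl hx, (hA' x hx).2 _ (by omega)⟩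
      · exact Set.insert_subset_insert Set.subset_union_left
      · rw [Finset.sum_range_succ]
        omega
  refine (key m le_rfl).mono ?_ ?_ le_rfl
  · rintro x (hx | ⟨j, h1, h2, rfl⟩)
    · exact (hA' x hx).1
    · exact hA j h1 h2
  · rintro l (hl | ⟨j, h1, h2, rfl⟩)
    · exact hl
    · omega

/-- Either `F` asserts that vertex `u` carries a red stone other than `j`, or the variables
`p_{u,k}` are unused and all the clauses `stoneRed u k` are known. -/
def RedOrKnown (m : ℕ) (L : Set (Set (Lit SV))) (A : Set SV) (F : Set (Lit SV)) (u j : ℕ) : Prop :=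
  (∃ k, 1 ≤ k ∧ k ≤ m ∧ k ≠ j ∧ (SV.p u k, false) ∈ F ∧ (SV.r k, false) ∈ F) ∨
    ∀ k, 1 ≤ k → k ≤ m → SV.p u k ∈ A ∧ stoneRed u k ∈ L

/-- Reduction to the case that vertex `u` carries a red stone other than `j`. -/
theorem derivable_of_red_stone {G : StoneDag} {m u j : ℕ} (hu : 1 ≤ u) (huN : u ≤ G.N)
    (hm : 1 ≤ m) {L : Set (Set (Lit SV))} {A : Set SV} {F : Set (Lit SV)} {s : ℕ}
    (hF : (SV.r j, true) ∈ F) (hpred : RedOrKnown m L A F u j)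
    (hr : ∀ k, 1 ≤ k → k ≤ m → k ≠ j → SV.r k ∈ A ∨ (SV.r k, false) ∈ F)
    (h : ∀ k, 1 ≤ k → k ≤ m → k ≠ j → Derivable (stoneClauses G m) L L
      (A \ {x | (∃ k', x = SV.p u k') ∨ x = SV.r k})
      (insert (SV.p u k, false) (insert (SV.r k, false) F)) s) :
    Derivable (stoneClauses G m) L L A F ((s + 3) * m + 1) := by
  rcases hpred with ⟨k, h1, h2, h3, h4, h5⟩ | hpred
  · refine (h k h1 h2 h3).mono Set.sdiff_subset ?_ (by nlinarith)
    rintro l (rfl | rfl | hl)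
    exacts [h4, h5, hl]
  · have hc := derivable_stone_cases (G := G) (m := m) hu huN (Lf := fun _ => L) (A := A)
      (A' := A \ {x | ∃ k', x = SV.p u k'}) (F := F) (s := fun _ => s + 2)
      (fun x hx => ⟨hx.1, fun k _ hk => hx.2 ⟨k, hk⟩⟩) (fun k h1 h2 => (hpred k h1 h2).1) ?_
    · refine hc.mono subset_rfl subset_rfl ?_
      simp only [Finset.sum_const, Finset.card_range, smul_eq_mul]
      nlinarith
    · intro k hk
      have hL := (hpred (k + 1) (by omega) hk).2
      rcases eq_or_ne (k + 1) j with rfl | hkj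
      · refine (Derivable.lemma_mem hL ?_).mono subset_rfl subset_rfl (by omega)
        rintro l (rfl | rfl)
        exacts [Or.inl rfl, Or.inr hF]
      · have hk' := h (k + 1) (by omega) hk hkj
        by_cases hrF : (SV.r (k + 1), false) ∈ F
        · refine hk'.mono ?_ ?_ (by omega)
          · exact fun x hx => ⟨hx.1, fun h => hx.2 (Or.inl h)⟩
          · rintro l (rfl | rfl | hl)
            exacts [Or.inl rfl, Or.inr hrF, Or.inr hl]
        · have hrA := (hr (k + 1) (by omega) hk hkj).resolve_right hrF
          refine (Derivable.resolve (A := A \ {x | ∃ k', x = SV.p u k'}) (x := SV.r (k + 1))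
            ⟨hrA, by simp⟩
            (Derivable.lemma_mem hL ?_) (hk'.mono ?_ ?_ le_rfl)).mono
            subset_rfl subset_rfl (show 1 + s + 1 ≤ s + 2 by omega)
          · rintro l (rfl | rfl)
            exacts [Or.inr (Or.inl rfl), Or.inl rfl]
          · exact fun x hx => ⟨⟨hx.1, fun h => hx.2 (Or.inl h)⟩, fun h => hx.2 (Or.inr h)⟩
          · rintro l (rfl | rfl | hl)
            exacts [Or.inr (Or.inl rfl), Or.inl rfl, Or.inr (Or.inr hl)]

/-- If all vertices above `i` are known to carry red stones, so does `i`. -/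
theorem derivable_vertex_red {G : StoneDag} {m i j : ℕ} (hi : 1 ≤ i) (hiN : i ≤ G.N)
    (hj : 1 ≤ j) (hjm : j ≤ m) {L : Set (Set (Lit SV))} {A : Set SV} {F : Set (Lit SV)}
    (hp : (SV.p i j, false) ∈ F) (hF : (SV.r j, true) ∈ F)
    (hpred : ∀ u, i < u → u ≤ G.N → RedOrKnown m L A F u j)
    (hr : ∀ k, 1 ≤ k → k ≤ m → k ≠ j → SV.r k ∈ A ∨ (SV.r k, false) ∈ F) :
    Derivable (stoneClauses G m) L L A F (9 * m ^ 2) := by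
  have hm : 1 ≤ m := hj.trans hjm
  rcases lt_or_ge G.n i with hn | hn
  · refine (Derivable.initial (c := {(SV.p i j, false), (SV.r j, true)}) ?_ ?_).mono
      subset_rfl subset_rfl (by nlinarith)
    · exact Or.inl (Or.inl (Or.inr ⟨i, j, hn, hiN, hj, hjm, rfl⟩))
    · intro l hl
      simp only [Finset.mem_insert, Finset.mem_singleton] at hl
      rcases hl with rfl | rfl
      exacts [hp, hF]
  · have h1 := G.p1_gt i hi hn
    have h2 := G.p2_gt i hi hn
    have hne := G.p_ne i hi hn
    refine (derivable_of_red_stone (u := G.p1 i) (s := 4 * m + 1) (by omega) (G.p1_le i hi hn) hm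
      hF (hpred _ h1 (G.p1_le i hi hn)) hr ?_).mono subset_rfl subset_rfl (by nlinarith)
    intro k hk hkm hkj
    refine (derivable_of_red_stone (u := G.p2 i) (s := 1) (by omega) (G.p2_le i hi hn) hm
      (Or.inr (Or.inr hF)) ?_ ?_ ?_).mono subset_rfl subset_rfl (by omega)
    · rcases hpred _ h2 (G.p2_le i hi hn) with ⟨a, ha, ham, haj, hpa, hra⟩ | h
      · exact Or.inl ⟨a, ha, ham, haj, Or.inr (Or.inr hpa), Or.inr (Or.inr hra)⟩
      · refine Or.inr fun a ha ham => ⟨⟨(h a ha ham).1, ?_⟩, (h a ha ham).2⟩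
        rintro (⟨b, hb⟩ | hb)
        · exact hne (SV.p.inj hb).1.symm
        · cases hb
    · intro a ha ham haj
      rcases eq_or_ne a k with rfl | hak
      · exact Or.inr (Or.inr (Or.inl rfl))
      · refine (hr a ha ham haj).imp (fun h => ⟨h, ?_⟩) fun h => Or.inr (Or.inr h)
        rintro (⟨b, hb⟩ | hb)
        · cases hb
        · exact hak (SV.r.inj hb)
    · intro a ha ham haj
      refine Derivable.initial (Or.inr ⟨i, j, k, a, hi, hn, hj, hjm, hk, hkm, ha, ham,
        hkj.symm, haj.symm, rfl⟩) ?_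
      intro l hl
      simp only [Finset.mem_insert, Finset.mem_singleton] at hl
      rcases hl with rfl | rfl | rfl | rfl | rfl | rfl <;> simp [hp, hF]

/-- The clauses `stoneRed u j` for `u > i + 1`, and for `u = i + 1` with `j ≤ k`. -/
def knownRed (N m i k : ℕ) : Set (Set (Lit SV)) :=
  {q | ∃ u j, 1 ≤ j ∧ j ≤ m ∧ u ≤ N ∧ (i + 1 < u ∨ u = i + 1 ∧ j ≤ k) ∧ q = stoneRed u j}

/-- The assertion that the vertices `1,…,i` all carry the stone `1`. -/
def firstStones (i : ℕ) : Set (Lit SV) := {l | ∃ u, 1 ≤ u ∧ u ≤ i ∧ l = (SV.p u 1, false)}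

/-- With stone `1` on the vertices `1,…,i` and stone `j = k + 1` on vertex `i + 1`, derive
`stoneRed (i + 1) j` and close the branch. -/
theorem derivable_learn_red {G : StoneDag} {m i k : ℕ} (hi : i + 1 ≤ G.N) (hk : k + 1 ≤ m)
    {A : Set SV} (hp : ∀ u j, i + 1 < u → 1 ≤ j → SV.p u j ∈ A) (hr : ∀ j, SV.r j ∈ A) :
    Derivable (stoneClauses G m) (knownRed G.N m i k) (knownRed G.N m i (k + 1)) A
      (insert (SV.p (i + 1) (k + 1), false) (firstStones i)) (21 * m ^ 2) := by
  have hm : 1 ≤ m := by omega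
  have hknown : ∀ k u a, i + 1 < u → u ≤ G.N → 1 ≤ a → a ≤ m →
      stoneRed u a ∈ knownRed G.N m i k :=
    fun k u a hu huN ha ham => ⟨u, a, ha, ham, huN, Or.inl hu, rfl⟩
  have hred : Derivable (stoneClauses G m) (knownRed G.N m i k) (knownRed G.N m i (k + 1))
      (A \ {SV.r (k + 1)}) (stoneRed (i + 1) (k + 1)) (9 * m ^ 2) := by
    refine (derivable_vertex_red (i := i + 1) (j := k + 1) (by omega) hi (by omega) hk
      (Or.inl rfl) (Or.inr rfl) ?_ ?_).learn.mono_learned subset_rfl ?_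
    · exact fun u hu huN => Or.inr fun a ha ham =>
        ⟨⟨hp u a hu ha, by simp⟩, hknown k u a hu huN ha ham⟩
    · exact fun a _ _ hak => Or.inl ⟨hr a, by simpa using hak⟩
    · rintro q ⟨u, a, ha, ham, huN, hu, rfl⟩
      by_cases h : u = i + 1 ∧ a = k + 1
      · obtain ⟨rfl, rfl⟩ := h
        exact Or.inl rfl
      · exact Or.inr ⟨u, a, ha, ham, huN, by omega, rfl⟩
  have hsink : ∀ {L : Set (Set (Lit SV))} {A : Set SV} {F : Set (Lit SV)} (j : ℕ), 1 ≤ j →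
      j ≤ m → (SV.p 1 j, false) ∈ F → (SV.r j, false) ∈ F →
      Derivable (stoneClauses G m) L L A F 1 := by
    intro L A F j hj hjm h1 h2
    refine Derivable.initial (c := {(SV.p 1 j, false), (SV.r j, false)})
      (Or.inl (Or.inr ⟨j, hj, hjm, rfl⟩)) ?_
    intro l hl
    simp only [Finset.mem_insert, Finset.mem_singleton] at hl
    rcases hl with rfl | rfl
    exacts [h1, h2]
  have hclose : Derivable (stoneClauses G m) (knownRed G.N m i (k + 1))
      (knownRed G.N m i (k + 1)) (A \ {SV.r (k + 1)})
      (insert (SV.r (k + 1), false) (insert (SV.p (i + 1) (k + 1), false) (firstStones i)))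
      (9 * m ^ 2 + 1 + 1) := by
    rcases Nat.eq_zero_or_pos i with rfl | hi0
    · exact (hsink (k + 1) (by omega) hk (Or.inr (Or.inl rfl)) (Or.inl rfl)).mono
        subset_rfl subset_rfl (by omega)
    · have h1 : (SV.p 1 1, false) ∈ firstStones i := ⟨1, le_rfl, hi0, rfl⟩
      rcases Nat.eq_zero_or_pos k with rfl | hk0
      · exact (hsink 1 le_rfl hm (Or.inr (Or.inr h1)) (Or.inl rfl)).mono
          subset_rfl subset_rfl (by omega)
      · refine Derivable.resolve (x := SV.r 1) ⟨hr 1, ?_⟩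
          (derivable_vertex_red (i := i) (j := 1) hi0 (by omega) le_rfl hm
            (Or.inr (Or.inr (Or.inr ⟨i, hi0, le_rfl, rfl⟩))) (Or.inl rfl) ?_ ?_)
          (hsink 1 le_rfl hm (Or.inr (Or.inr (Or.inr h1))) (Or.inl rfl))
        · simp only [Set.mem_singleton_iff, SV.r.injEq]
          omega
        · intro u hu huN
          rcases eq_or_ne u (i + 1) with rfl | hne
          · exact Or.inl ⟨k + 1, by omega, hk, by omega, Or.inr (Or.inr (Or.inl rfl)),
              Or.inr (Or.inl rfl)⟩
          · exact Or.inr fun a ha ham => ⟨⟨⟨hp u a (by omega) ha, by simp⟩, by simp⟩,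
              hknown _ u a (by omega) huN ha ham⟩
        · intro a ha ham ha1
          rcases eq_or_ne a (k + 1) with rfl | hak
          · exact Or.inr (Or.inr (Or.inl rfl))
          · exact Or.inl ⟨⟨hr a, by simpa using hak⟩, by simpa using ha1⟩
  refine (Derivable.resolve (hr (k + 1)) (hred.mono subset_rfl ?_ le_rfl) hclose).mono
    subset_rfl subset_rfl (by nlinarith)
  rintro l (rfl | rfl)
  exacts [Or.inr (Or.inl rfl), Or.inl rfl]

/-- The variables `p_{u,j}` with `u > i` and all variables `r_j`. -/
def varsAbove (i : ℕ) : Set SV := {x | (∃ u j, i < u ∧ x = SV.p u j) ∨ ∃ j, x = SV.r j}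

theorem derivable_firstStones (G : StoneDag) {m : ℕ} (hm : G.N ≤ m) (d : ℕ) :
    ∀ i, i + d = G.N → Derivable (stoneClauses G m) ∅ (knownRed G.N m i m) (varsAbove i)
      (firstStones i) (24 * d * m ^ 3 + 21 * m ^ 2) := by
  have hN : 1 ≤ G.N := Nat.one_le_of_lt G.n_lt_N
  have hm1 : 1 ≤ m := hN.trans hm
  have hstones : ∀ i, insert (SV.p (i + 1) 1, false) (firstStones i) = firstStones (i + 1) := by
    intro i
    ext l
    constructor
    · rintro (rfl | ⟨u, h1, h2, rfl⟩)
      exacts [⟨i + 1, by omega, le_rfl, rfl⟩, ⟨u, h1, by omega, rfl⟩]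
    · rintro ⟨u, h1, h2, rfl⟩
      rcases eq_or_ne u (i + 1) with rfl | hne
      exacts [Or.inl rfl, Or.inr ⟨u, h1, by omega, rfl⟩]
  induction d with
  | zero =>
    intro i hi
    obtain ⟨e, rfl⟩ : ∃ e, i = e + 1 := ⟨i - 1, by omega⟩
    have h := derivable_learn_red (G := G) (i := e) (k := 0) (by omega) hm1
      (A := varsAbove (e + 1)) (fun u j hu _ => Or.inl ⟨u, j, hu, rfl⟩)
      (fun j => Or.inr ⟨j, rfl⟩)
    rw [hstones] at h
    refine (h.mono_learned ?_ ?_).mono subset_rfl subset_rfl (by omega)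
    · rintro q ⟨u, j, h1, h2, h3, h4, rfl⟩
      omega
    · rintro q ⟨u, j, h1, h2, h3, h4, rfl⟩
      omega
  | succ d ih =>
    intro i hi
    have hlearn : ∀ k, k < m → ∀ A : Set SV, (∀ u j, i + 1 < u → 1 ≤ j → SV.p u j ∈ A) →
        (∀ j, SV.r j ∈ A) → _ :=
      fun k hk A h1 h2 => derivable_learn_red (G := G) (i := i) (by omega) hk (A := A) h1 h2
    have hc := derivable_stone_cases (G := G) (m := m) (v := i + 1) (by omega) (by omega)
      (Lf := fun k => if k = 0 then ∅ else knownRed G.N m i k)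
      (A := varsAbove i) (A' := insert (SV.p (i + 1) 0) (varsAbove (i + 1))) (F := firstStones i)
      (s := fun k => if k = 0 then (24 * d * m ^ 3 + 21 * m ^ 2) + 21 * m ^ 2 + 1
        else 21 * m ^ 2) ?_ ?_ ?_
    · simp only [if_true, if_neg (show m ≠ 0 by omega)] at hc
      refine hc.mono subset_rfl subset_rfl ?_
      obtain ⟨e, rfl⟩ : ∃ e, m = e + 1 := ⟨m - 1, by omega⟩
      rw [Finset.sum_range_succ']
      simp only [Nat.add_eq_zero_iff, one_ne_zero, and_false, if_false, if_true, Finset.sum_const,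
        Finset.card_range, smul_eq_mul]
      nlinarith [Nat.zero_le e, Nat.zero_le (e ^ 2), Nat.zero_le (e ^ 3)]
    · rintro x (rfl | ⟨u, j, hu, rfl⟩ | ⟨j, rfl⟩)
      · refine ⟨Or.inl ⟨i + 1, 0, by omega, rfl⟩, fun a _ ha => ?_⟩
        have := (SV.p.inj ha).2
        omega
      · refine ⟨Or.inl ⟨u, j, by omega, rfl⟩, fun a _ ha => ?_⟩
        have := (SV.p.inj ha).1
        omega
      · exact ⟨Or.inr ⟨j, rfl⟩, fun a _ ha => by cases ha⟩
    · exact fun j _ _ => Or.inl ⟨i + 1, j, by omega, rfl⟩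
    · intro k hk
      rcases Nat.eq_zero_or_pos k with rfl | hk0
      · simp only [if_true, zero_add, one_ne_zero, if_false]
        -- `p_{i+1,0}` does not occur in the clause set; it only joins the two subtrees.
        refine Derivable.resolve (x := SV.p (i + 1) 0) (L₁ := knownRed G.N m i 0)
          (Or.inl rfl) (((ih (i + 1) (by omega)).mono_learned subset_rfl ?_).mono ?_ ?_ le_rfl)
          ((hlearn 0 hk _ ?_ ?_).mono subset_rfl (Set.subset_insert _ _) le_rfl)
        · rintro q ⟨u, j, h1, h2, h3, h4, rfl⟩
          exact ⟨u, j, h1, h2, h3, by omega, rfl⟩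
        · refine fun x hx => ⟨Or.inr hx, ?_⟩
          rintro rfl
          obtain ⟨u, j, hu, h⟩ | ⟨j, h⟩ := hx
          · have := (SV.p.inj h).1
            omega
          · cases h
        · rw [hstones]
          exact Set.subset_insert _ _
        · intro u j hu hj
          refine ⟨Or.inr (Or.inl ⟨u, j, hu, rfl⟩), fun h => ?_⟩
          have := (SV.p.inj h).2
          omega
        · exact fun j => ⟨Or.inr (Or.inr ⟨j, rfl⟩), by simp⟩
      · simp only [if_neg (show k ≠ 0 by omega), Nat.add_eq_zero_iff, one_ne_zero, and_false,
          if_false]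
        exact hlearn k hk _ (fun u j hu _ => Or.inr (Or.inl ⟨u, j, hu, rfl⟩))
          fun j => Or.inr (Or.inr ⟨j, rfl⟩)

/-- `Stone(G,m)` has regWRTL refutations of size `O(N·m³)`. -/
theorem stone_regWRTL : ∃ c : ℕ, ∀ (G : StoneDag) (m : ℕ), G.N ≤ m →
    ∃ T : PTree SV, RegWRTLRefutation (stoneClauses G m) T ∧
      T.size ≤ c * G.N * m ^ 3 := by
  refine ⟨45, fun G m hm => ?_⟩
  have hN : 1 ≤ G.N := Nat.one_le_of_lt G.n_lt_N
  have hm1 : 1 ≤ m := hN.trans hm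
  obtain ⟨t, h1, h2, h3, h4, -, h6, -⟩ :=
    derivable_firstStones G hm G.N 0 (by omega) ∅ (by simp)
  refine ⟨t, ⟨?_, h1, h2, h3⟩, h6.trans ?_⟩
  · refine Finset.eq_empty_of_forall_notMem fun l hl => ?_
    obtain ⟨u, hu, hu', -⟩ := h4 l hl
    omega
  · have h : m ^ 2 ≤ G.N * m ^ 3 := by
      rw [pow_succ m 2]
      calc m ^ 2 = 1 * (m ^ 2 * 1) := by ring
        _ ≤ G.N * (m ^ 2 * m) := by gcongr
    nlinarith
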